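/- Let θ ∈ (0, π) with cos θ ∈ ℚ, and write cos θ = s/r with r, s coprime integers and r > 0. Let n be a positive squarefree integer with n ∉ {1, 2, 3, 6}. Then n is θ-congruent if and only if the curve E_{n,θ} : n·y² = (1/r)·x·(x + s/r − 1)·(x + s/r + 1) has infinitely many rational points; that is, if and only if the set {(x, y) ∈ ℚ × ℚ : n·y² = x·(x + s/r − 1)·(x + s/r + 1)/r} is infinite (equivalently, E_{n,θ}(ℚ) has positive rank). -/

import Mathlib

/-- A positive squarefree integer `n` is `θ`-congruent (where `cos θ = s / r` with
`r > 0` and `gcd(s, r) = 1`) if `n * r * sin θ` is the area of a triangle with rational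
sides and an angle `θ`; equivalently, there are positive rationals `a, b, c` with
`a * b = 2 * n * r` and `c ^ 2 = a ^ 2 + b ^ 2 - 2 * a * b * (s / r)`. -/
def IsThetaCongruent (r s : ℤ) (n : ℕ) : Prop :=
  ∃ a b c : ℚ, 0 < a ∧ 0 < b ∧ 0 < c ∧
    a * b = 2 * (n : ℚ) * (r : ℚ) ∧
    c ^ 2 = a ^ 2 + b ^ 2 - 2 * a * b * ((s : ℚ) / (r : ℚ))

/-- The curve `w = z³ + a z² w + b z w²`, which is `Y² = X³ + a X² + b X` in the coordinates
`z = X / Y`, `w = 1 / Y` around its point at infinity. -/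
def OnChart {R : Type*} [CommRing R] (a b z w : R) : Prop :=
  w = z ^ 3 + a * z ^ 2 * w + b * z * w ^ 2

namespace OnChart

variable {R : Type*} [CommRing R]

/-- The chord-tangent sum of two points of the chart, with its first coordinate to second order. -/
lemma exists_add {q α β : R} (hq : ∀ x : R, IsUnit (1 + q * x)) {d z₁ w₁ z₂ w₂ : R}
    (h₁ : OnChart (q * α) (q ^ 2 * β) z₁ w₁) (h₂ : OnChart (q * α) (q ^ 2 * β) z₂ w₂)
    (hd : d ∣ z₁) :
    ∃ z₃ w₃ e : R, OnChart (q * α) (q ^ 2 * β) z₃ w₃ ∧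
      z₃ = z₁ + z₂ - q * α * (z₁ * z₂ * (z₁ + z₂)) + q ^ 2 * d * e := by
  unfold OnChart at *
  obtain ⟨x, rfl⟩ := hd
  set z₁ := d * x with hz₁
  obtain ⟨D', hD'⟩ := (hq (-α * z₁ ^ 2 - q * β * z₁ * (w₁ + w₂))).exists_right_inv
  set N := z₁ ^ 2 + z₁ * z₂ + z₂ ^ 2 + q * α * (z₁ + z₂) * w₂ + q ^ 2 * β * w₂ ^ 2 with hN
  set D := 1 + q * (-α * z₁ ^ 2 - q * β * z₁ * (w₁ + w₂)) with hD
  obtain ⟨l, hl⟩ : ∃ l, l * D = N := ⟨N * D', by linear_combination N * hD'⟩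
  obtain ⟨v, hv⟩ : ∃ v, w₁ = l * z₁ + v := ⟨w₁ - l * z₁, by ring⟩
  have hv₂ : w₂ = l * z₂ + v := by
    have key : D * (w₁ - w₂) = (z₁ - z₂) * N := by
      rw [hD, hN]; linear_combination h₁ - h₂
    have : D * (w₁ - w₂ - l * (z₁ - z₂)) = 0 := by linear_combination key - (z₁ - z₂) * hl
    have : w₁ - w₂ - l * (z₁ - z₂) = 0 := by
      linear_combination D' * this - (w₁ - w₂ - l * (z₁ - z₂)) * hD'
    linear_combination hv - this
  obtain ⟨T', hT'⟩ := (hq (α * l + q * β * l ^ 2)).exists_right_inv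
  set t := α * l + q * β * l ^ 2 with ht
  obtain ⟨z₃, hz₃⟩ : ∃ z₃, z₃ = z₁ + z₂ + v * (q * α + 2 * (q ^ 2 * β) * l) * T' := ⟨_, rfl⟩
  have hT₃ : (1 + q * t) * (z₃ - z₁ - z₂) = v * (q * α + 2 * (q ^ 2 * β) * l) := by
    rw [hz₃]; linear_combination v * (q * α + 2 * (q ^ 2 * β) * l) * hT'
  obtain ⟨m, hm⟩ : ∃ m, m = α * z₁ * w₁ + q * β * w₁ ^ 2 := ⟨_, rfl⟩
  obtain ⟨k, hk⟩ : ∃ k, k = α * (z₁ + z₂) * w₂ + q * β * w₂ ^ 2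
    + l * (α * z₁ ^ 2 + q * β * z₁ * (w₁ + w₂)) := ⟨_, rfl⟩
  have hvs : v = -(z₁ * z₂ * (z₁ + z₂)) + q * z₁ * (m - k) := by
    rw [hm, hk]
    linear_combination h₁ - hv - z₁ * hl + z₁ * l * hD - z₁ * hN
  have hvd : v = d * (x * (-(z₂ * (z₁ + z₂)) + q * (m - k))) := by
    rw [hvs, hz₁]; ring
  refine ⟨z₃, l * z₃ - v, α * x * (m - k)
    + (-(α * t) + 2 * β * l) * (x * (-(z₂ * (z₁ + z₂)) + q * (m - k))) * T', ?_, ?_⟩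
  · have hG : l = z₁ ^ 2 + z₁ * z₂ + z₂ ^ 2 + q * α * (z₁ ^ 2 * l + (z₁ + z₂) * w₂)
        + q ^ 2 * β * (z₁ * l * (w₁ + w₂) + w₂ ^ 2) := by
      linear_combination hl - l * hD + hN
    clear_value z₁ N D t
    subst ht
    rw [hv] at h₁
    rw [hv, hv₂] at hG
    linear_combination -h₁ + (z₃ + z₁) * hG - (z₃ + z₁) * (z₃ + z₂) * hT₃
  · have hz₁' : q * z₁ * (m - k) = q * d * (x * (m - k)) := by rw [hz₁]; ring
    have e₁ : v * (q * α + 2 * (q ^ 2 * β) * l) * T'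
        = q * α * v + q ^ 2 * (-(α * t) + 2 * β * l) * v * T' := by
      linear_combination q * α * v * hT'
    rw [hz₃, e₁]
    linear_combination q * α * hvs + q * α * hz₁'
      + q ^ 2 * (-(α * t) + 2 * β * l) * T' * hvd

/-- The `k`-th multiple of a point of the chart, with its first coordinate to second order. -/
lemma exists_nsmul {q α β : R} (hq : ∀ x : R, IsUnit (1 + q * x)) {z w : R}
    (h : OnChart (q * α) (q ^ 2 * β) z w) (k : ℕ) :
    ∃ (z' w' e : R) (T : ℤ), OnChart (q * α) (q ^ 2 * β) z' w' ∧ 3 * T = (k : ℤ) ^ 3 - k ∧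
      z' = z * (k - q * α * z ^ 2 * T + q ^ 2 * e) := by
  induction k with
  | zero => exact ⟨0, 0, 0, 0, by simp [OnChart], by simp, by simp⟩
  | succ k ih =>
    obtain ⟨z₁, w₁, e, T, h₁, hT, hz₁⟩ := ih
    obtain ⟨z₂, w₂, e', h₂, hz₂⟩ := exists_add hq h h₁ dvd_rfl
    obtain ⟨y, hy⟩ : ∃ y, y = -α * z ^ 2 * T + q * e := ⟨_, rfl⟩
    refine ⟨z₂, w₂, e + e' - α * z ^ 2 * (y + 2 * k * y + q * y ^ 2), T + k ^ 2 + k, h₂,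
      by push_cast; linear_combination hT, ?_⟩
    have hzy : z₁ = z * (k + q * y) := by rw [hz₁, hy]; ring
    rw [hz₂, hzy]
    push_cast
    linear_combination q * z * hy

lemma exists_prime_nsmul {p : ℕ} (hp : p.Prime) (hp5 : 5 ≤ p)
    (hu : ∀ x : R, IsUnit (1 + (p : R) * x)) {α β z w : R}
    (h : OnChart (p * α) (p ^ 2 * β) z w) :
    ∃ z' w' f : R, OnChart (p * α) (p ^ 2 * β) z' w' ∧ z' = z * p * (1 + p * f) := by
  obtain ⟨z', w', e, T, h', hT, hz'⟩ := exists_nsmul hu h p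
  have hpT : (p : ℤ) ∣ T := by
    have h3 : (p : ℤ) ∣ 3 * T := ⟨(p : ℤ) ^ 2 - 1, by rw [hT]; ring⟩
    refine ((Nat.prime_iff_prime_int.mp hp).dvd_or_dvd h3).resolve_left fun h => ?_
    have := Nat.le_of_dvd (by norm_num) (by exact_mod_cast h : p ∣ 3)
    omega
  obtain ⟨T', rfl⟩ := hpT
  exact ⟨z', w', e - α * z ^ 2 * T', h', by rw [hz']; push_cast; ring⟩

lemma exists_prime_pow_nsmul {p : ℕ} (hp : p.Prime) (hp5 : 5 ≤ p)
    (hu : ∀ x : R, IsUnit (1 + (p : R) * x)) {α β z w : R}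
    (h : OnChart (p * α) (p ^ 2 * β) z w) (j : ℕ) :
    ∃ z' w' f : R, OnChart (p * α) (p ^ 2 * β) z' w' ∧ z' = z * p ^ j * (1 + p * f) := by
  induction j with
  | zero => exact ⟨z, w, 0, h, by simp⟩
  | succ j ih =>
    obtain ⟨z₁, w₁, f₁, h₁, hz₁⟩ := ih
    obtain ⟨z₂, w₂, f₂, h₂, hz₂⟩ := exists_prime_nsmul hp hp5 hu h₁
    exact ⟨z₂, w₂, f₁ + f₂ + p * f₁ * f₂, h₂, by rw [hz₂, hz₁]; ring⟩

/-- A point with nonzero first coordinate has infinite order. -/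
lemma infinite [IsDomain R] [CharZero R] {p : ℕ} (hp : p.Prime) (hp5 : 5 ≤ p)
    (hu : ∀ x : R, IsUnit (1 + (p : R) * x)) (hpu : ¬ IsUnit (p : R)) {α β z w : R}
    (h : OnChart (p * α) (p ^ 2 * β) z w) (hz : z ≠ 0) :
    {P : R × R | OnChart (p * α) (p ^ 2 * β) P.1 P.2 ∧ P.1 ≠ 0}.Infinite := by
  choose Z W f hon hZ using exists_prime_pow_nsmul hp hp5 hu h
  have hp0 : (p : R) ≠ 0 := Nat.cast_ne_zero.mpr hp.ne_zero
  have hne : ∀ {i j : ℕ}, i < j → Z i ≠ Z j := by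
    intro i j hij hZij
    obtain ⟨k, rfl⟩ := Nat.exists_eq_add_of_lt hij
    have h0 : z * p ^ i * (1 + p * f i) =
        z * p ^ i * (p ^ (k + 1) * (1 + p * f (i + k + 1))) := by
      rw [← hZ, hZij, hZ]; ring
    have h1 := mul_left_cancel₀ (mul_ne_zero hz (pow_ne_zero i hp0)) h0
    refine hpu (IsUnit.of_mul_eq_one (p ^ k * (1 + p * f (i + k + 1)) - f i) ?_)
    linear_combination -h1
  refine Set.infinite_of_injective_forall_mem (f := fun j => (Z j, W j)) ?_ fun j => ⟨hon j, ?_⟩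
  · intro i j hij
    have hZij : Z i = Z j := congrArg Prod.fst hij
    rcases lt_trichotomy i j with hlt | heq | hgt
    · exact absurd hZij (hne hlt)
    · exact heq
    · exact absurd hZij.symm (hne hgt)
  · simp only [hZ]
    exact mul_ne_zero (mul_ne_zero hz (pow_ne_zero j hp0)) (hu _).ne_zero

end OnChart

namespace Rat.padicValuation

variable {p : ℕ} [Fact p.Prime]

lemma isUnit_intCast {m : ℤ} (hm : ¬ (p : ℤ) ∣ m) :
    IsUnit (m : (Rat.padicValuation p).valuationSubring) := by
  have hv : Rat.padicValuation p (m : ℚ) = 1 := by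
    rw [Rat.padicValuation_cast, Int.padicValuation_eq_one_iff]; exact hm
  have hm0 : (m : ℚ) ≠ 0 := by
    rintro h; rw [Int.cast_eq_zero] at h; exact hm (h ▸ dvd_zero _)
  refine IsUnit.of_mul_eq_one ⟨(m : ℚ)⁻¹, ?_⟩ (Subtype.ext ?_)
  · rw [Valuation.mem_valuationSubring_iff, map_inv₀, hv, inv_one]
  · simp [hm0]

lemma valuation_natCast_lt_one : Rat.padicValuation p (p : ℚ) < 1 := by
  rw [← Int.cast_natCast, Rat.padicValuation_cast, Int.padicValuation_lt_one_iff]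

lemma isUnit_one_add_mul (x : (Rat.padicValuation p).valuationSubring) :
    IsUnit (1 + (p : (Rat.padicValuation p).valuationSubring) * x) := by
  have hlt : Rat.padicValuation p ((p : ℚ) * x) < 1 := by
    rw [map_mul]
    exact mul_lt_one_of_lt_of_le valuation_natCast_lt_one x.2
  have hv := Valuation.map_one_add_of_lt (Rat.padicValuation p) hlt
  have h0 : (1 + (p : ℚ) * x) ≠ 0 := by
    intro h; rw [h, map_zero] at hv; exact zero_ne_one hv
  refine IsUnit.of_mul_eq_one ⟨(1 + (p : ℚ) * x)⁻¹, ?_⟩ (Subtype.ext ?_)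
  · rw [Valuation.mem_valuationSubring_iff, map_inv₀, hv, inv_one]
  · simp [h0]

lemma not_isUnit_natCast : ¬ IsUnit (p : (Rat.padicValuation p).valuationSubring) := by
  intro h
  obtain ⟨y, hy⟩ := h.exists_right_inv
  have hy' : (p : ℚ) * y = 1 := by simpa using congrArg Subtype.val hy
  have : Rat.padicValuation p ((p : ℚ) * y) < 1 := by
    rw [map_mul]
    exact mul_lt_one_of_lt_of_le valuation_natCast_lt_one y.2
  rw [hy', map_one] at this
  exact lt_irrefl _ this

end Rat.padicValuation

/-- If `U² / h²`, `U² / h² + p A` and `U² / h² - p B` are rational squares and `p ∤ U`, then the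
curve `Y² = X (X + p A) (X - p B)` has infinitely many rational points in the chart. -/
lemma OnChart.infinite_rat_of_squares {p : ℕ} (hp : p.Prime) (hp5 : 5 ≤ p) {A B U V T h : ℤ}
    (hV : V ^ 2 = U ^ 2 + p * A * h ^ 2) (hT : T ^ 2 = U ^ 2 - p * B * h ^ 2)
    (hU : ¬ (p : ℤ) ∣ U) (hh : h ≠ 0) :
    {P : ℚ × ℚ | OnChart ((p : ℚ) * ((A : ℚ) - B)) ((p : ℚ) ^ 2 * (-(A * B))) P.1 P.2 ∧
      P.1 ≠ 0}.Infinite := by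
  have : Fact p.Prime := ⟨hp⟩
  have hpZ := Nat.prime_iff_prime_int.mp hp
  have hpV : ¬ (p : ℤ) ∣ V := fun hd => hU (hpZ.dvd_of_dvd_pow (n := 2) (by
    rw [show U ^ 2 = V * V - p * (A * h ^ 2) by linear_combination -hV]
    exact dvd_sub (hd.mul_right _) (dvd_mul_right _ _)))
  have hpT : ¬ (p : ℤ) ∣ T := fun hd => hU (hpZ.dvd_of_dvd_pow (n := 2) (by
    rw [show U ^ 2 = T * T + p * (B * h ^ 2) by linear_combination -hT]
    exact dvd_add (hd.mul_right _) (dvd_mul_right _ _)))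
  set R := (Rat.padicValuation p).valuationSubring
  obtain ⟨U', hU'⟩ := (Rat.padicValuation.isUnit_intCast hU).exists_right_inv
  obtain ⟨V', hV'⟩ := (Rat.padicValuation.isUnit_intCast hpV).exists_right_inv
  obtain ⟨T', hT'⟩ := (Rat.padicValuation.isUnit_intCast hpT).exists_right_inv
  have hVR : (V : R) ^ 2 = U ^ 2 + p * A * h ^ 2 := by exact_mod_cast congrArg (Int.cast : ℤ → R) hV
  have hTR : (T : R) ^ 2 = U ^ 2 - p * B * h ^ 2 := by exact_mod_cast congrArg (Int.cast : ℤ → R) hT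
  have hon : OnChart ((p : R) * ((A : R) - B)) ((p : R) ^ 2 * (-(A * B)))
      (U * h * V' * T') (h ^ 3 * U' * V' * T') := by
    unfold OnChart
    linear_combination -(h : R) ^ 3 * U' * V' * T' * ((V * V' + 1) * (T * T') ^ 2 * hV'
        + (T * T' + 1) * hT')
      + h ^ 3 * U' * V' ^ 3 * T' ^ 3 * (T ^ 2 * hVR + (U ^ 2 + p * A * h ^ 2) * hTR)
      + h ^ 3 * V' ^ 3 * T' ^ 3 * (U ^ 3 + p ^ 2 * A * B * h ^ 4 * U') * hU'
  have hz : (U * h * V' * T' : R) ≠ 0 := by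
    have hh0 : (h : R) ≠ 0 := Int.cast_ne_zero.mpr hh
    exact mul_ne_zero (mul_ne_zero (mul_ne_zero
      (Rat.padicValuation.isUnit_intCast hU).ne_zero hh0) (right_ne_zero_of_mul_eq_one hV'))
      (right_ne_zero_of_mul_eq_one hT')
  have hinf := OnChart.infinite hp hp5 Rat.padicValuation.isUnit_one_add_mul
    Rat.padicValuation.not_isUnit_natCast hon hz
  refine (hinf.image (f := Prod.map (Subtype.val : R → ℚ) (Subtype.val : R → ℚ))
    (Subtype.val_injective.prodMap Subtype.val_injective).injOn).mono ?_
  rintro _ ⟨⟨z, w⟩, ⟨h₁, h₂⟩, rfl⟩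
  refine ⟨?_, fun h0 => h₂ (Subtype.ext h0)⟩
  have := congrArg (Subtype.val : R → ℚ) h₁
  simpa [OnChart] using this

lemma exists_prime_five_le_dvd {n : ℕ} (hnsf : Squarefree n)
    (h1 : n ≠ 1) (h2 : n ≠ 2) (h3 : n ≠ 3) (h6 : n ≠ 6) :
    ∃ p, p.Prime ∧ 5 ≤ p ∧ p ∣ n := by
  by_contra! hcon
  have hsub : n.primeFactors ⊆ Nat.primeFactors 6 := by
    intro q hq
    have hq' := Nat.prime_of_mem_primeFactors hq
    have hlt : q < 5 := by
      by_contra! hge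
      exact hcon q hq' hge (Nat.dvd_of_mem_primeFactors hq)
    interval_cases q <;> revert hq' <;> norm_num [Nat.mem_primeFactors]
  have hdvd : n ∣ 6 := by
    rw [← Nat.prod_primeFactors_of_squarefree hnsf]
    exact (Finset.prod_dvd_prod_of_subset _ _ _ hsub).trans (Nat.prod_primeFactors_dvd 6)
  have hle := Nat.le_of_dvd (by norm_num) hdvd
  interval_cases n <;> revert hdvd <;> first | contradiction | decide

lemma exists_int_of_sq_eq {q : ℚ} {m : ℤ} (h : q ^ 2 = m) : ∃ k : ℤ, (k : ℚ) = q :=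
  IsIntegrallyClosed.exists_algebraMap_eq_of_isIntegral_pow (R := ℤ) two_pos
    (h ▸ isIntegral_algebraMap (x := m))

/-- If `n` is `θ`-congruent, halving the sides gives a rational `x` such that
`x, x + n (r + s), x - n (r - s)` are all squares; at a prime `p ∣ n` this `x` is not divisible
by `p`. -/
lemma IsThetaCongruent.exists_squares {r s : ℤ} (hr : 0 < r) (hrs : Int.gcd s r = 1) {p m : ℕ}
    (hp : p.Prime) (hp5 : 5 ≤ p) (hpm : ¬ p ∣ m) (h : IsThetaCongruent r s (p * m)) :
    ∃ U V T h : ℤ, V ^ 2 = U ^ 2 + p * (m * (r + s)) * h ^ 2 ∧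
      T ^ 2 = U ^ 2 - p * (m * (r - s)) * h ^ 2 ∧ ¬ (p : ℤ) ∣ U ∧ h ≠ 0 := by
  obtain ⟨a, b, c, -, -, -, hab, hc⟩ := h
  have hr0 : (r : ℚ) ≠ 0 := by exact_mod_cast hr.ne'
  push_cast at hab
  have hc' : c ^ 2 = a ^ 2 + b ^ 2 - 4 * (p * m) * s := by
    rw [hc, show 2 * a * b * ((s : ℚ) / r) = 2 * (a * b) * (s / r) by ring, hab]
    field_simp
    ring
  obtain ⟨u, hu⟩ : ∃ u, u = c / 2 := ⟨_, rfl⟩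
  have hud : u * u.den = u.num := Rat.mul_den_eq_num u
  have hadd : ((a + b) / 2 * u.den) ^ 2 = u.num ^ 2 + p * (m * (r + s)) * (u.den : ℚ) ^ 2 := by
    rw [← hud]
    linear_combination (u.den : ℚ) ^ 2 * (1 / 2 * hab - 1 / 4 * hc' - (u + c / 2) * hu)
  have hsub : ((a - b) / 2 * u.den) ^ 2 = u.num ^ 2 - p * (m * (r - s)) * (u.den : ℚ) ^ 2 := by
    rw [← hud]
    linear_combination (u.den : ℚ) ^ 2 * (-1 / 2 * hab - 1 / 4 * hc' - (u + c / 2) * hu)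
  obtain ⟨V, hV⟩ : ∃ V : ℤ, (V : ℚ) = (a + b) / 2 * u.den :=
    exists_int_of_sq_eq (m := u.num ^ 2 + p * (m * (r + s)) * u.den ^ 2) (mod_cast hadd)
  obtain ⟨T, hT⟩ : ∃ T : ℤ, (T : ℚ) = (a - b) / 2 * u.den :=
    exists_int_of_sq_eq (m := u.num ^ 2 - p * (m * (r - s)) * u.den ^ 2) (mod_cast hsub)
  rw [← hV] at hadd
  rw [← hT] at hsub
  have hV2 : V ^ 2 = u.num ^ 2 + p * (m * (r + s)) * (u.den : ℤ) ^ 2 := mod_cast hadd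
  have hT2 : T ^ 2 = u.num ^ 2 - p * (m * (r - s)) * (u.den : ℤ) ^ 2 := mod_cast hsub
  refine ⟨u.num, V, T, u.den, hV2, hT2, fun hpu => ?_, by exact_mod_cast u.den_ne_zero⟩
  have hpZ := Nat.prime_iff_prime_int.mp hp
  have hpden : ¬ (p : ℤ) ∣ u.den := fun hd =>
    Nat.not_coprime_of_dvd_of_dvd hp.one_lt (Int.natCast_dvd.mp hpu)
      (Int.natCast_dvd_natCast.mp hd) u.reduced
  have hdesc : ∀ {W k : ℤ}, W ^ 2 = u.num ^ 2 + p * (m * k) * (u.den : ℤ) ^ 2 → (p : ℤ) ∣ k := by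
    intro W k hW
    obtain ⟨x, hx⟩ := hpu
    obtain ⟨y, rfl⟩ : (p : ℤ) ∣ W := hpZ.dvd_of_dvd_pow (n := 2)
      ⟨p * x ^ 2 + m * k * (u.den : ℤ) ^ 2, by rw [hW, hx]; ring⟩
    have hmk : (p : ℤ) ∣ m * k * (u.den : ℤ) ^ 2 :=
      ⟨y ^ 2 - x ^ 2, mul_left_cancel₀ hpZ.ne_zero (by rw [hx] at hW; linear_combination -hW)⟩
    rcases hpZ.dvd_or_dvd hmk with hmk | hd
    · exact (hpZ.dvd_or_dvd hmk).resolve_left fun hm => hpm (Int.natCast_dvd_natCast.mp hm)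
    · exact absurd (hpZ.dvd_of_dvd_pow hd) hpden
  have hrs_add := hdesc hV2
  have hrs_sub : (p : ℤ) ∣ -(r - s) := hdesc (W := T) (by rw [hT2]; ring)
  have h2 : ¬ (p : ℤ) ∣ 2 := fun hd => by
    have := Nat.le_of_dvd two_pos (Int.natCast_dvd_natCast.mp hd)
    omega
  have hps : (p : ℤ) ∣ s := (hpZ.dvd_or_dvd (show (p : ℤ) ∣ 2 * s by
    rw [show 2 * s = r + s + -(r - s) by ring]; exact dvd_add hrs_add hrs_sub)).resolve_left h2
  have hpr : (p : ℤ) ∣ r := (hpZ.dvd_or_dvd (show (p : ℤ) ∣ 2 * r by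
    rw [show 2 * r = r + s - -(r - s) by ring]; exact dvd_sub hrs_add hrs_sub)).resolve_left h2
  have hone := Int.dvd_coe_gcd hps hpr
  rw [hrs] at hone
  exact hpZ.not_isUnit (isUnit_of_dvd_one hone)

/-- A rational point with nonzero ordinate on `E_{n,θ}` gives a triangle with rational sides. -/
lemma isThetaCongruent_of_point {r s : ℤ} (hr : 0 < r) (hs : |(s : ℚ) / r| < 1) {n : ℕ}
    (hn : 0 < n) {x y : ℚ} (hy : y ≠ 0)
    (h : (n : ℚ) * y ^ 2 = x * (x + (s : ℚ) / r - 1) * (x + (s : ℚ) / r + 1) / r) :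
    IsThetaCongruent r s n := by
  have hr0 : (0 : ℚ) < r := by exact_mod_cast hr
  have hn0 : (0 : ℚ) < n := by exact_mod_cast hn
  have hx : x ≠ 0 := by
    rintro rfl
    have : (n : ℚ) * y ^ 2 ≠ 0 := mul_ne_zero hn0.ne' (pow_ne_zero 2 hy)
    exact this (by rw [h]; simp)
  set k : ℚ := (s : ℚ) / r with hk
  have hk1 : 0 < 1 - k ^ 2 := by
    have := (sq_lt_one_iff_abs_lt_one k).mpr hs
    linarith
  have h' : (n : ℚ) * r * y ^ 2 = x * ((x + k) ^ 2 - 1) := by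
    field_simp at h
    linear_combination h
  have hpos : 0 < x ^ 2 + 1 - k ^ 2 := by nlinarith [sq_nonneg x]
  have habs : |(n : ℚ) * r * y / x| * |2 * x / y| = 2 * n * r := by
    rw [← abs_mul, show (n : ℚ) * r * y / x * (2 * x / y) = 2 * n * r by field_simp,
      abs_of_pos (by positivity)]
  refine ⟨|n * r * y / x|, |2 * x / y|, |(x ^ 2 + 1 - k ^ 2) / y|,
    abs_pos.mpr (by positivity), abs_pos.mpr (by positivity),
    abs_pos.mpr (div_ne_zero hpos.ne' hy), habs, ?_⟩
  rw [← hk, mul_assoc 2 |_| |_|, habs, sq_abs, sq_abs, sq_abs]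
  have e : (n : ℚ) * r * y / x = ((x + k) ^ 2 - 1) / y := by
    field_simp
    linear_combination h'
  rw [e]
  have e2 : (n : ℚ) * r = x * ((x + k) ^ 2 - 1) / y ^ 2 := by
    field_simp
    linear_combination h'
  rw [mul_assoc 2 (n : ℚ), e2]
  field_simp
  ring

lemma abs_div_lt_one_of_cos_eq {θ : ℝ} (hθ0 : 0 < θ) (hθπ : θ < Real.pi) {r s : ℤ}
    (hcos : Real.cos θ = (s : ℝ) / (r : ℝ)) : |(s : ℚ) / r| < 1 := by
  have hsin := Real.sin_pos_of_pos_of_lt_pi hθ0 hθπ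
  have h : |(s : ℝ) / r| < 1 := by
    rw [← hcos, ← sq_lt_one_iff_abs_lt_one]
    nlinarith [Real.sin_sq_add_cos_sq θ]
  exact_mod_cast h

/-- Rational points of the chart of `Y² = X (X + n (r + s)) (X - n (r - s))` give rational points
of `E_{n,θ}`. -/
lemma infinite_points_of_infinite_chart {r s : ℤ} (hr : 0 < r) {n : ℕ} (hn : 0 < n) {a b : ℚ}
    (ha : a = 2 * n * s) (hb : b = -(n ^ 2 * (r + s) * (r - s)))
    (h : {P : ℚ × ℚ | OnChart a b P.1 P.2 ∧ P.1 ≠ 0}.Infinite) :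
    {p : ℚ × ℚ | (n : ℚ) * p.2 ^ 2 =
        p.1 * (p.1 + (s : ℚ) / (r : ℚ) - 1) * (p.1 + (s : ℚ) / (r : ℚ) + 1) /
          (r : ℚ)}.Infinite := by
  have hr0 : (r : ℚ) ≠ 0 := by exact_mod_cast hr.ne'
  have hn0 : (n : ℚ) ≠ 0 := by exact_mod_cast hn.ne'
  have hw : ∀ {z w : ℚ}, OnChart a b z w → z ≠ 0 → w ≠ 0 := by
    rintro z w hzw hz rfl
    exact pow_ne_zero 3 hz (by simpa [OnChart] using hzw.symm)
  have hinj : Set.InjOn (fun P : ℚ × ℚ => (P.1 / (P.2 * n * r), 1 / (n ^ 2 * r ^ 2 * P.2)))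
      {P : ℚ × ℚ | OnChart a b P.1 P.2 ∧ P.1 ≠ 0} := by
    rintro ⟨z, w⟩ ⟨h₁, hz⟩ ⟨z', w'⟩ ⟨h₁', hz'⟩ heq
    have hw0 := hw h₁ hz
    have hw0' := hw h₁' hz'
    simp only [Prod.mk.injEq] at heq hw0 hw0' ⊢
    obtain ⟨e₁, e₂⟩ := heq
    have hww : w = w' := by
      field_simp at e₂
      exact e₂.symm
    subst hww
    field_simp at e₁
    exact ⟨e₁, rfl⟩
  refine (h.image hinj).mono ?_
  rintro _ ⟨⟨z, w⟩, ⟨h₁, hz⟩, rfl⟩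
  have hw0 := hw h₁ hz
  simp only [OnChart, ha, hb] at h₁ hw0
  simp only [Set.mem_ofPred_eq]
  field_simp
  linear_combination h₁

/-- (Fujiwara) A positive squarefree integer `n ∉ {1, 2, 3, 6}` is `θ`-congruent if and
only if the curve `E_{n,θ} : n·y² = (1/r)·x·(x + s/r − 1)·(x + s/r + 1)` has infinitely
many rational points (equivalently, `E_{n,θ}(ℚ)` has positive rank). -/
theorem fujiwara_theta_congruent_iff_positive_rank
    (θ : ℝ) (hθ0 : 0 < θ) (hθπ : θ < Real.pi)
    (r s : ℤ) (hr : 0 < r) (hrs : Int.gcd s r = 1)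
    (hcos : Real.cos θ = (s : ℝ) / (r : ℝ))
    (n : ℕ) (hn : 0 < n) (hnsf : Squarefree n)
    (h1 : n ≠ 1) (h2 : n ≠ 2) (h3 : n ≠ 3) (h6 : n ≠ 6) :
    IsThetaCongruent r s n ↔
      {p : ℚ × ℚ | (n : ℚ) * p.2 ^ 2 =
        p.1 * (p.1 + (s : ℚ) / (r : ℚ) - 1) * (p.1 + (s : ℚ) / (r : ℚ) + 1) /
          (r : ℚ)}.Infinite := by
  constructor
  · intro h
    obtain ⟨p, hp, hp5, m, rfl⟩ := exists_prime_five_le_dvd hnsf h1 h2 h3 h6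
    have hpm : ¬ p ∣ m := fun hd =>
      hp.one_lt.ne' (Nat.isUnit_iff.mp (hnsf p (mul_dvd_mul_left p hd)))
    obtain ⟨U, V, T, d, hV, hT, hU, hd⟩ := h.exists_squares hr hrs hp hp5 hpm
    refine infinite_points_of_infinite_chart hr hn ?_ ?_
      (OnChart.infinite_rat_of_squares hp hp5 hV hT hU hd)
    · push_cast; ring
    · push_cast; ring
  · intro h
    have hfin : ({0, 1 - (s : ℚ) / r, -1 - (s : ℚ) / r} ×ˢ {0} : Set (ℚ × ℚ)).Finite :=
      Set.toFinite _
    obtain ⟨⟨x, y⟩, hxy, hnot⟩ := (h.sdiff hfin).nonempty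
    have hs := abs_div_lt_one_of_cos_eq hθ0 hθπ hcos
    refine isThetaCongruent_of_point hr hs hn (fun hy => hnot ?_) hxy
    replace hy : y = 0 := hy
    have hr0 : (r : ℚ) ≠ 0 := by exact_mod_cast hr.ne'
    replace hxy : (n : ℚ) * y ^ 2 = x * (x + s / r - 1) * (x + s / r + 1) / r := hxy
    rw [hy, zero_pow two_ne_zero, mul_zero, eq_comm, div_eq_zero_iff, mul_eq_zero,
      mul_eq_zero] at hxy
    refine ⟨?_, hy⟩
    simp only [Set.mem_insert_iff, Set.mem_singleton_iff]
    rcases hxy with ((h | h) | h) | h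
    · exact Or.inl h
    · exact Or.inr (Or.inl (by linarith))
    · exact Or.inr (Or.inr (by linarith))
    · exact absurd h hr0
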